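/- There exists a universal constant c₂ > 0 such that for every N ≥ 2, if U is an N × N random unitary matrix distributed according to Haar measure on the unitary group U(N), then the expected Kolmogorov distance between its empirical spectral measure and the uniform measure on the unit circle satisfies E d_K(μ_N, ν) ≤ c₂ · log(N)/N. -/

import Mathlib

open MeasureTheory Real Filter

noncomputable section

/-- The Borel σ-algebra on the unitary group `U(N)`. -/
instance (N : ℕ) : MeasurableSpace (Matrix.unitaryGroup (Fin N) ℂ) := borel _

instance (N : ℕ) : BorelSpace (Matrix.unitaryGroup (Fin N) ℂ) := ⟨rfl⟩

/-- The eigenvalue angles (in `[0, 2π)`, with multiplicity) of a unitary matrix `U`: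
the arguments of the roots of the characteristic polynomial, shifted to lie in `[0, 2π)`. -/
def eigenAngles (N : ℕ) (U : Matrix.unitaryGroup (Fin N) ℂ) : Multiset ℝ :=
  ((U : Matrix (Fin N) (Fin N) ℂ).charpoly.roots).map
    (fun z => if 0 ≤ Complex.arg z then Complex.arg z else Complex.arg z + 2 * π)

open Classical in
/-- `𝒩_A`: the number of eigenvalue angles of `U` lying in the set `A`. -/
def countAngles (N : ℕ) (U : Matrix.unitaryGroup (Fin N) ℂ) (A : Set ℝ) : ℕ :=
  Multiset.card ((eigenAngles N U).filter (· ∈ A))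

/-- `𝒩_θ`: the number of eigenvalue angles of `U` in `[0, θ]`. -/
def countFun (N : ℕ) (U : Matrix.unitaryGroup (Fin N) ℂ) (θ : ℝ) : ℕ :=
  countAngles N U (Set.Icc 0 θ)

/-- The Kolmogorov distance between the empirical spectral measure of `U` and the
uniform measure on the circle: `sup_{0 ≤ θ < 2π} |𝒩_θ/N - θ/(2π)|`. -/
def dK (N : ℕ) (U : Matrix.unitaryGroup (Fin N) ℂ) : ℝ :=
  ⨆ θ : Set.Ico (0:ℝ) (2 * π), |(countFun N U θ : ℝ) / N - (θ : ℝ) / (2 * π)|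

/-- `max_{1 ≤ k ≤ N} |𝒩_{2πk/N} - k|`. -/
def maxDev (N : ℕ) (U : Matrix.unitaryGroup (Fin N) ℂ) : ℝ :=
  ⨆ k : (Finset.Icc 1 N : Finset ℕ), |(countFun N U (2 * π * (k : ℕ) / N) : ℝ) - ((k : ℕ) : ℝ)|

end

/-!
Eliminating the first row and column of `1 - A`, again and again, writes `det (1 - A)` as a product
of factors `1 - a` with `‖a‖ < 1` whenever `A` is a strict contraction; summing the principal
logarithms of these factors gives a continuous branch of `log det (1 - A)` on the open unit ball.
For `A = U * W` with `U` Haar distributed, each `a` is, given the previous ones, an entry of a Haar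
unitary applied to a vector of norm at most one: it has mean zero and variance at most the inverse
of the current dimension. Hence the exponential moments of `Im log det (1 - A)` are at most
`∏ k ≤ N, (1 + C / k) ≤ exp (C (1 + log N))`.

Letting `A` tend radially to `exp (-iα) U`, the same bound holds for the phase of the characteristic
polynomial of `U` at `exp (iα)`. The increments of this phase count the eigenvalues on an arc up to
the expected number, so by monotonicity `N * d_K` is at most two plus the maximum of the phases over
a grid of `N + 2` points, and that maximum has expectation `O(log N)` by Jensen's inequality.
-/

noncomputable section

/-! ### Schur complements and `log det (1 - A)` -/

section SchurComplement

/-- The matrix `S` for which `1 - S` is the Schur complement of the `(0, 0)` entry in `1 - A`. -/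
def schurCompl {K : Type*} [Field K] {n : ℕ} (A : Matrix (Fin (n + 1)) (Fin (n + 1)) K) :
    Matrix (Fin n) (Fin n) K :=
  .of fun i j => A i.succ j.succ + A i.succ 0 * A 0 j.succ / (1 - A 0 0)

theorem schurCompl_zero {K : Type*} [Field K] {n : ℕ} :
    schurCompl (0 : Matrix (Fin (n + 1)) (Fin (n + 1)) K) = 0 := by
  ext i j
  simp [schurCompl]

theorem det_one_sub_eq_mul_det_one_sub_schurCompl {K : Type*} [Field K] {n : ℕ}
    {A : Matrix (Fin (n + 1)) (Fin (n + 1)) K} (hA : A 0 0 ≠ 1) :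
    (1 - A).det = (1 - A 0 0) * (1 - schurCompl A).det := by
  have ha : 1 - A 0 0 ≠ 0 := sub_ne_zero.2 hA.symm
  let B : Matrix (Fin (n + 1)) (Fin (n + 1)) K :=
    .of (Fin.cons ((1 - A) 0) fun i => Fin.cons 0 ((1 - schurCompl A) i))
  have row_reduction : (1 - A).det = B.det := by
    refine Matrix.det_eq_of_forall_row_eq_smul_add_const
      (Fin.cons 0 fun i => -A i.succ 0 / (1 - A 0 0)) 0 (by simp) fun i j => ?_
    cases i using Fin.cases with
    | zero => simp [B]
    | succ i =>
      cases j using Fin.cases with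
      | zero => simp [B]; field_simp
      | succ j => simp [B, Matrix.one_apply, schurCompl, (Fin.succ_ne_zero _).symm]; ring
  have submatrix_eq : B.submatrix Fin.succ Fin.succ = 1 - schurCompl A := by
    ext i j
    simp [B]
  rw [row_reduction, Matrix.det_succ_column_zero, Fin.sum_univ_succ,
    Finset.sum_eq_zero fun i _ => by simp [B]]
  have succAbove_eq : (Fin.succAbove 0 : Fin n → Fin (n + 1)) = Fin.succ := funext fun _ => rfl
  rw [succAbove_eq, submatrix_eq]
  simp [B]

end SchurComplement

section OperatorNorm

open scoped Matrix Matrix.Norms.L2Operator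

variable {𝕜 : Type*} [RCLike 𝕜] {m n : Type*} [Fintype m] [Fintype n] [DecidableEq n]

theorem sum_norm_sq_mulVec_le (A : Matrix m n 𝕜) (v : n → 𝕜) :
    ∑ i, ‖(A *ᵥ v) i‖ ^ 2 ≤ ‖A‖ ^ 2 * ∑ j, ‖v j‖ ^ 2 := by
  have h := pow_le_pow_left₀ (norm_nonneg _) (A.l2_opNorm_mulVec (WithLp.toLp 2 v)) 2
  rwa [mul_pow, EuclideanSpace.norm_sq_eq, EuclideanSpace.norm_sq_eq] at h

theorem l2_opNorm_le_of_sum_norm_sq_mulVec_le {A : Matrix m n 𝕜} {r : ℝ} (hr : 0 ≤ r)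
    (h : ∀ v : n → 𝕜, ∑ i, ‖(A *ᵥ v) i‖ ^ 2 ≤ r ^ 2 * ∑ j, ‖v j‖ ^ 2) : ‖A‖ ≤ r := by
  refine ContinuousLinearMap.opNorm_le_bound _ hr fun v => ?_
  refine (sq_le_sq₀ (norm_nonneg _) (mul_nonneg hr (norm_nonneg _))).1 ?_
  rw [mul_pow, EuclideanSpace.norm_sq_eq, EuclideanSpace.norm_sq_eq]
  exact h v.ofLp

theorem sum_norm_sq_col_le (A : Matrix m n 𝕜) (j : n) : ∑ i, ‖A i j‖ ^ 2 ≤ ‖A‖ ^ 2 := by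
  simpa [Pi.single_apply, apply_ite norm, ite_pow] using
    sum_norm_sq_mulVec_le A (Pi.single j 1)

theorem norm_apply_le_l2_opNorm (A : Matrix m n 𝕜) (i : m) (j : n) : ‖A i j‖ ≤ ‖A‖ :=
  (sq_le_sq₀ (norm_nonneg _) (norm_nonneg _)).1 <|
    (Finset.single_le_sum (f := fun i => ‖A i j‖ ^ 2) (fun _ _ => sq_nonneg _)
      (Finset.mem_univ i)).trans (sum_norm_sq_col_le A j)

/- For each `y` there is an `x` with `A (x, y) = (x, S y)`, where `S = schurCompl A`. -/
theorem norm_schurCompl_le {n : ℕ} {A : Matrix (Fin (n + 1)) (Fin (n + 1)) 𝕜} (hA : ‖A‖ ≤ 1)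
    (ha : A 0 0 ≠ 1) : ‖schurCompl A‖ ≤ ‖A‖ := by
  refine l2_opNorm_le_of_sum_norm_sq_mulVec_le (norm_nonneg A) fun y => ?_
  have ha' : 1 - A 0 0 ≠ 0 := sub_ne_zero.2 ha.symm
  let x : 𝕜 := (∑ j, A 0 j.succ * y j) / (1 - A 0 0)
  let v : Fin (n + 1) → 𝕜 := Fin.cons x y
  have mulVec_zero : (A *ᵥ v) 0 = x := by
    simp only [Matrix.mulVec, dotProduct, Fin.sum_univ_succ, v, Fin.cons_zero, Fin.cons_succ]
    have hx : ∑ j, A 0 j.succ * y j = x * (1 - A 0 0) := (div_mul_cancel₀ _ ha').symm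
    rw [hx]
    ring
  have mulVec_succ (i : Fin n) : (A *ᵥ v) i.succ = (schurCompl A *ᵥ y) i := by
    simp only [Matrix.mulVec, dotProduct, Fin.sum_univ_succ, v, Fin.cons_zero, Fin.cons_succ,
      schurCompl, Matrix.of_apply, add_mul, Finset.sum_add_distrib, x, Finset.sum_div,
      Finset.mul_sum]
    rw [add_comm]
    congr 1
    exact Finset.sum_congr rfl fun j _ => by ring
  have h := sum_norm_sq_mulVec_le A v
  rw [Fin.sum_univ_succ, Fin.sum_univ_succ] at h
  simp only [mulVec_zero, mulVec_succ, v, Fin.cons_zero, Fin.cons_succ] at h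
  have hx : ‖A‖ ^ 2 * ‖x‖ ^ 2 ≤ ‖x‖ ^ 2 :=
    mul_le_of_le_one_left (sq_nonneg _) (pow_le_one₀ (norm_nonneg A) hA)
  linarith

end OperatorNorm

theorem one_sub_mem_slitPlane_of_norm_le_one {w : ℂ} (hw : ‖w‖ ≤ 1) (hw' : w ≠ 1) :
    1 - w ∈ Complex.slitPlane := by
  rw [Complex.mem_slitPlane_iff, Complex.sub_re, Complex.one_re, Complex.sub_im, Complex.one_im]
  by_contra! h
  have him : w.im = 0 := by linarith [h.2]
  have hre : w.re = 1 := le_antisymm ((Complex.re_le_norm w).trans hw) (by linarith [h.1])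
  exact hw' (Complex.ext hre him)

theorem one_sub_mem_slitPlane_of_norm_lt_one {w : ℂ} (hw : ‖w‖ < 1) : 1 - w ∈ Complex.slitPlane :=
  one_sub_mem_slitPlane_of_norm_le_one hw.le fun h => by simp [h] at hw

section LogDet

open scoped Matrix Matrix.Norms.L2Operator

/-- The branch of `log det (1 - A)` on the open unit ball of the operator norm which vanishes at
`A = 0`, computed by peeling off one Schur complement at a time. -/
def logDetOneSub : {n : ℕ} → Matrix (Fin n) (Fin n) ℂ → ℂ
  | 0, _ => 0
  | _ + 1, A => Complex.log (1 - A 0 0) + logDetOneSub (schurCompl A)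

variable {n : ℕ}

theorem apply_zero_zero_ne_one {A : Matrix (Fin (n + 1)) (Fin (n + 1)) ℂ} (hA : ‖A‖ < 1) :
    A 0 0 ≠ 1 := fun h =>
  (norm_apply_le_l2_opNorm A 0 0).not_gt (by simpa [h] using hA)

theorem norm_schurCompl_lt_one {A : Matrix (Fin (n + 1)) (Fin (n + 1)) ℂ} (hA : ‖A‖ < 1) :
    ‖schurCompl A‖ < 1 :=
  (norm_schurCompl_le hA.le (apply_zero_zero_ne_one hA)).trans_lt hA

theorem exp_logDetOneSub {A : Matrix (Fin n) (Fin n) ℂ} (hA : ‖A‖ < 1) :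
    Complex.exp (logDetOneSub A) = (1 - A).det := by
  induction n with
  | zero => simp [logDetOneSub]
  | succ n ih =>
    have ha := apply_zero_zero_ne_one hA
    rw [logDetOneSub, Complex.exp_add, Complex.exp_log (sub_ne_zero.2 ha.symm),
      ih (norm_schurCompl_lt_one hA), det_one_sub_eq_mul_det_one_sub_schurCompl ha]

theorem logDetOneSub_zero : logDetOneSub (0 : Matrix (Fin n) (Fin n) ℂ) = 0 := by
  induction n with
  | zero => rfl
  | succ n ih => simp [logDetOneSub, schurCompl_zero, ih]

theorem continuousOn_schurCompl :
    ContinuousOn schurCompl (Metric.ball (0 : Matrix (Fin (n + 1)) (Fin (n + 1)) ℂ) 1) := by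
  refine continuousOn_pi.2 fun i => continuousOn_pi.2 fun j => ?_
  have entry (k l : Fin (n + 1)) :
      ContinuousOn (fun A : Matrix (Fin (n + 1)) (Fin (n + 1)) ℂ => A k l) (Metric.ball 0 1) :=
    (continuous_apply_apply k l).continuousOn
  refine (entry _ _).add (((entry _ _).mul (entry _ _)).div (continuousOn_const.sub (entry _ _)) ?_)
  intro A hA
  exact sub_ne_zero.2 (apply_zero_zero_ne_one (mem_ball_zero_iff.1 hA)).symm

theorem continuousOn_logDetOneSub :
    ContinuousOn logDetOneSub (Metric.ball (0 : Matrix (Fin n) (Fin n) ℂ) 1) := by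
  induction n with
  | zero => exact continuousOn_const
  | succ n ih =>
    refine ContinuousOn.add ?_ (ih.comp continuousOn_schurCompl fun A hA => ?_)
    · refine ContinuousOn.clog
        (continuousOn_const.sub (continuous_apply_apply 0 0).continuousOn) fun A hA => ?_
      exact one_sub_mem_slitPlane_of_norm_lt_one
        ((norm_apply_le_l2_opNorm A 0 0).trans_lt (mem_ball_zero_iff.1 hA))
    · exact mem_ball_zero_iff.2 (norm_schurCompl_lt_one (mem_ball_zero_iff.1 hA))

theorem card_roots_charpoly {R : Type*} [Field R] [IsAlgClosed R] {m : Type*} [Fintype m]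
    [DecidableEq m] (A : Matrix m m R) : A.charpoly.roots.card = Fintype.card m := by
  rw [IsAlgClosed.card_roots_eq_natDegree, Matrix.charpoly_natDegree_eq_dim]

theorem det_one_sub_smul_eq_prod_roots_charpoly {R : Type*} [Field R] [IsAlgClosed R]
    {m : Type*} [Fintype m] [DecidableEq m] (A : Matrix m m R) (c : R) :
    (1 - c • A).det = (A.charpoly.roots.map fun z => 1 - c * z).prod := by
  rcases eq_or_ne c 0 with rfl | hc
  · simp
  have h1 : 1 - c • A = c • (Matrix.scalar m c⁻¹ - A) := by
    rw [smul_sub, Matrix.scalar_apply, ← Matrix.smul_one_eq_diagonal, smul_inv_smul₀ hc]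
  have h2 : (fun z => 1 - c * z) = fun z => c * (c⁻¹ - z) := by
    funext z
    field_simp
  rw [h1, Matrix.det_smul, ← Matrix.eval_charpoly,
    (IsAlgClosed.splits A.charpoly).eval_eq_prod_roots_of_monic A.charpoly_monic, h2,
    Multiset.prod_map_mul, Multiset.map_const', Multiset.prod_replicate, card_roots_charpoly]

theorem norm_le_l2_opNorm_of_mem_roots_charpoly {m : Type*} [Fintype m] [DecidableEq m]
    {A : Matrix m m ℂ} {z : ℂ} (hz : z ∈ A.charpoly.roots) : ‖z‖ ≤ ‖A‖ := by
  have : Nonempty m := by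
    by_contra! h
    simp [Matrix.charpoly_isEmpty] at hz
  have hz' := Matrix.mem_spectrum_of_isRoot_charpoly (Polynomial.isRoot_of_mem_roots hz)
  simpa using spectrum.norm_le_norm_mul_of_mem hz'

variable {m : Type*} [Fintype m] [DecidableEq m]

/-- The sum `∑ log (1 - c z)` over the eigenvalues `z` of `A`, with multiplicity. -/
def eigenLogSum (A : Matrix m m ℂ) (c : ℂ) : ℂ :=
  (A.charpoly.roots.map fun z => Complex.log (1 - c * z)).sum

theorem norm_mul_le_l2_opNorm_smul_of_mem_roots_charpoly {A : Matrix m m ℂ} (c : ℂ)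
    {z : ℂ} (hz : z ∈ A.charpoly.roots) : ‖c * z‖ ≤ ‖c • A‖ := by
  rw [norm_smul, norm_mul]
  exact mul_le_mul_of_nonneg_left (norm_le_l2_opNorm_of_mem_roots_charpoly hz) (norm_nonneg c)

theorem exp_eigenLogSum {A : Matrix m m ℂ} {c : ℂ} (h : ‖c • A‖ < 1) :
    Complex.exp (eigenLogSum A c) = (1 - c • A).det := by
  rw [eigenLogSum, Complex.exp_multiset_sum, Multiset.map_map,
    det_one_sub_smul_eq_prod_roots_charpoly]
  refine congrArg Multiset.prod (Multiset.map_congr rfl fun z hz => Complex.exp_log ?_)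
  exact Complex.slitPlane_ne_zero
    (one_sub_mem_slitPlane_of_norm_lt_one
      ((norm_mul_le_l2_opNorm_smul_of_mem_roots_charpoly c hz).trans_lt h))

theorem continuousOn_eigenLogSum (A : Matrix m m ℂ) :
    ContinuousOn (eigenLogSum A) {c | ‖c • A‖ < 1} := by
  refine continuousOn_multiset_sum _ fun z hz => ContinuousOn.clog (by fun_prop) fun c hc => ?_
  exact one_sub_mem_slitPlane_of_norm_lt_one
    ((norm_mul_le_l2_opNorm_smul_of_mem_roots_charpoly c hz).trans_lt hc)

theorem eqOn_of_exp_eqOn {X : Type*} [TopologicalSpace X] {s : Set X} {f g : X → ℂ}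
    (hs : IsPreconnected s) (hf : ContinuousOn f s) (hg : ContinuousOn g s)
    (hfg : s.EqOn (fun x => Complex.exp (f x)) fun x => Complex.exp (g x)) {a : X} (ha : a ∈ s)
    (hfga : f a = g a) : s.EqOn f g :=
  Complex.isCoveringMap_exp.eqOn_of_comp_eqOn hs hf hg (fun _ hx => Subtype.ext (hfg hx)) ha hfga

theorem logDetOneSub_smul {A : Matrix (Fin n) (Fin n) ℂ} {c : ℂ} (hc : ‖c • A‖ < 1) :
    logDetOneSub (c • A) = eigenLogSum A c := by
  let s : Set ℂ := {c | ‖c • A‖ < 1}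
  have hs : IsPreconnected s := by
    have := ((convexOn_norm (convex_univ (E := ℂ))).smul (norm_nonneg A)).convex_lt 1
    simpa [s, norm_smul, mul_comm] using this.isPreconnected
  have zero_mem : (0 : ℂ) ∈ s := by simp [s]
  refine eqOn_of_exp_eqOn (f := fun c => logDetOneSub (c • A)) hs
    (continuousOn_logDetOneSub.comp (by fun_prop) fun c hc => mem_ball_zero_iff.2 hc)
    (continuousOn_eigenLogSum A) (fun c hc => ?_) zero_mem ?_ hc
  · simp only [exp_logDetOneSub hc, exp_eigenLogSum hc]
  · simp [logDetOneSub_zero, eigenLogSum]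

theorem abs_im_logDetOneSub_le (A : Matrix (Fin n) (Fin n) ℂ) :
    |(logDetOneSub A).im| ≤ n * π := by
  induction n with
  | zero => simp [logDetOneSub]
  | succ n ih =>
    rw [logDetOneSub, Complex.add_im, Complex.log_im, Nat.cast_succ, add_one_mul, add_comm]
    exact (abs_add_le _ _).trans (add_le_add (ih _) (Complex.abs_arg_le_pi _))

end LogDet

/-! ### Averaging over the unitary group -/

section CompactGroup

theorem integrable_of_continuous_of_compactSpace {X E : Type*} [TopologicalSpace X]
    [CompactSpace X] [MeasurableSpace X] [BorelSpace X] [NormedAddCommGroup E] {μ : Measure X}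
    [IsFiniteMeasure μ] {f : X → E} (hf : Continuous f) : Integrable f μ :=
  hf.integrable_of_hasCompactSupport (.of_compactSpace f)

theorem integral_eq_integral_integral_mul_left {G H E : Type*} [TopologicalSpace G] [Group G]
    [IsTopologicalGroup G] [CompactSpace G] [MeasurableSpace G] [BorelSpace G]
    [TopologicalSpace H] [CompactSpace H] [MeasurableSpace H] [BorelSpace H]
    [NormedAddCommGroup E] [NormedSpace ℝ E] [CompleteSpace E] (μ : Measure G) [IsFiniteMeasure μ]
    [μ.IsMulLeftInvariant] (ν : Measure H) [IsProbabilityMeasure ν] {g : H → G}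
    (hg : Continuous g) {F : G → E} (hF : Continuous F) :
    ∫ x, F x ∂μ = ∫ x, ∫ y, F (g y * x) ∂ν ∂μ := by
  rw [integral_integral_swap_of_hasCompactSupport (f := fun x y => F (g y * x))
    (by simp only [Function.uncurry_def]; fun_prop) (.of_compactSpace _)]
  simp only [integral_mul_left_eq_self, integral_const, probReal_univ, one_smul]

end CompactGroup

section UnitaryGroup

open scoped Matrix

variable {n : ℕ}

instance compactSpace_unitaryGroup {m 𝕜 : Type*} [Fintype m] [DecidableEq m] [RCLike 𝕜] :
    CompactSpace (Matrix.unitaryGroup m 𝕜) := by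
  have box : IsCompact (Set.univ.pi fun _ : m => Set.univ.pi fun _ : m =>
      Metric.closedBall (0 : 𝕜) 1) :=
    isCompact_univ_pi fun _ => isCompact_univ_pi fun _ => isCompact_closedBall _ _
  refine isCompact_iff_compactSpace.1
    (IsCompact.of_isClosed_subset (X := Matrix m m 𝕜) box isClosed_unitary ?_)
  exact fun U hU i _ j _ => mem_closedBall_zero_iff.2 (entry_norm_bound_of_unitary hU i j)

theorem exists_isProbabilityMeasure_isMulLeftInvariant (G : Type*) [TopologicalSpace G] [Group G]
    [IsTopologicalGroup G] [CompactSpace G] [MeasurableSpace G] [BorelSpace G] :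
    ∃ μ : Measure G, IsProbabilityMeasure μ ∧ μ.IsMulLeftInvariant :=
  ⟨Measure.haarMeasure ⊤, ⟨Measure.haarMeasure_self⟩, inferInstance⟩

theorem sum_norm_sq_unitaryGroup_mulVec {m 𝕜 : Type*} [Fintype m] [DecidableEq m] [RCLike 𝕜]
    (U : Matrix.unitaryGroup m 𝕜) (w : m → 𝕜) :
    ∑ i, ‖(U.1 *ᵥ w) i‖ ^ 2 = ∑ i, ‖w i‖ ^ 2 := by
  have sum_eq (v : m → 𝕜) : ((∑ i, ‖v i‖ ^ 2 : ℝ) : 𝕜) = star v ⬝ᵥ v := by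
    simp [dotProduct, RCLike.conj_mul]
  refine RCLike.ofReal_injective (K := 𝕜) ?_
  rw [sum_eq, sum_eq, Matrix.star_mulVec, Matrix.dotProduct_mulVec, Matrix.vecMul_vecMul,
    ← Matrix.star_eq_conjTranspose, Matrix.UnitaryGroup.star_mul_self, Matrix.vecMul_one]

theorem permMatrix_mem_unitaryGroup {m R : Type*} [Fintype m] [DecidableEq m] [CommRing R]
    [StarRing R] (σ : Equiv.Perm m) : σ.permMatrix R ∈ Matrix.unitaryGroup m R := by
  rw [Matrix.mem_unitaryGroup_iff, Matrix.star_eq_conjTranspose, Matrix.conjTranspose_permMatrix,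
    ← Matrix.permMatrix_mul, inv_mul_cancel, Matrix.permMatrix_one]

variable (P : Measure (Matrix.unitaryGroup (Fin n) ℂ)) [P.IsMulLeftInvariant]

theorem integral_unitaryGroup_mulVec (w : Fin n → ℂ) (i : Fin n) :
    ∫ U : Matrix.unitaryGroup (Fin n) ℂ, (U.1 *ᵥ w) i ∂P = 0 :=
  integral_eq_zero_of_mul_left_eq_neg (g := -1) fun U => by
    simp [Unitary.coe_neg, Matrix.neg_mulVec]

theorem integral_norm_sq_unitaryGroup_mulVec [IsProbabilityMeasure P] (w : Fin n → ℂ)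
    (i : Fin n) :
    ∫ U : Matrix.unitaryGroup (Fin n) ℂ, ‖(U.1 *ᵥ w) i‖ ^ 2 ∂P = (∑ k, ‖w k‖ ^ 2) / n := by
  have : NeZero n := ⟨i.pos.ne'⟩
  have exchangeable (k : Fin n) : ∫ U : Matrix.unitaryGroup (Fin n) ℂ, ‖(U.1 *ᵥ w) k‖ ^ 2 ∂P =
      ∫ U : Matrix.unitaryGroup (Fin n) ℂ, ‖(U.1 *ᵥ w) i‖ ^ 2 ∂P := by
    let σ : Matrix.unitaryGroup (Fin n) ℂ := ⟨_, permMatrix_mem_unitaryGroup (Equiv.swap i k)⟩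
    rw [← integral_mul_left_eq_self _ σ]
    simp [σ, ← Matrix.mulVec_mulVec, Matrix.permMatrix_mulVec]
  rw [eq_div_iff (NeZero.ne _)]
  calc (∫ U : Matrix.unitaryGroup (Fin n) ℂ, ‖(U.1 *ᵥ w) i‖ ^ 2 ∂P) * n
      = ∑ k, ∫ U : Matrix.unitaryGroup (Fin n) ℂ, ‖(U.1 *ᵥ w) k‖ ^ 2 ∂P := by
        simp only [exchangeable, Finset.sum_const, Finset.card_univ, Fintype.card_fin,
          nsmul_eq_mul, mul_comm]
    _ = ∫ U : Matrix.unitaryGroup (Fin n) ℂ, ∑ k, ‖(U.1 *ᵥ w) k‖ ^ 2 ∂P :=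
        (integral_finsetSum _ fun k _ =>
          integrable_of_continuous_of_compactSpace (by fun_prop)).symm
    _ = ∑ k, ‖w k‖ ^ 2 := by simp [sum_norm_sq_unitaryGroup_mulVec]

/-- The embedding `V ↦ 1 ⊕ V` of `U(n)` into `U(n + 1)`, as the stabilizer of the `0`-th basis
vector. -/
def unitaryEmbed (V : Matrix.unitaryGroup (Fin n) ℂ) : Matrix.unitaryGroup (Fin (n + 1)) ℂ :=
  ⟨.of (Fin.cons (Fin.cons 1 0) fun i => Fin.cons 0 (V.1 i)), by
    rw [Matrix.mem_unitaryGroup_iff]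
    ext i j
    rw [Matrix.mul_apply, Fin.sum_univ_succ]
    cases i using Fin.cases <;> cases j using Fin.cases
    case zero.zero => simp
    case zero.succ j => simp [(Fin.succ_ne_zero j).symm]
    case succ.zero i => simp
    case succ.succ i j =>
      have h := congrFun₂ (Matrix.mem_unitaryGroup_iff.1 V.2) i j
      rw [Matrix.mul_apply] at h
      simpa [Matrix.one_apply] using h⟩

theorem continuous_unitaryEmbed : Continuous (unitaryEmbed (n := n)) := by
  refine Continuous.subtype_mk (continuous_matrix fun i j => ?_) _
  cases i using Fin.cases <;> cases j using Fin.cases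
  case succ.succ i j => exact continuous_subtype_val.matrix_elem i j
  all_goals simpa using continuous_const

theorem unitaryEmbed_mul_apply_zero (V : Matrix.unitaryGroup (Fin n) ℂ)
    (A : Matrix (Fin (n + 1)) (Fin (n + 1)) ℂ) (j : Fin (n + 1)) :
    ((unitaryEmbed V).1 * A) 0 j = A 0 j := by
  simp [unitaryEmbed, Matrix.mul_apply, Fin.sum_univ_succ]

theorem unitaryEmbed_mul_apply_succ (V : Matrix.unitaryGroup (Fin n) ℂ)
    (A : Matrix (Fin (n + 1)) (Fin (n + 1)) ℂ) (i : Fin n) (j : Fin (n + 1)) :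
    ((unitaryEmbed V).1 * A) i.succ j = ∑ k, V.1 i k * A k.succ j := by
  simp [unitaryEmbed, Matrix.mul_apply, Fin.sum_univ_succ]

theorem schurCompl_unitaryEmbed_mul (V : Matrix.unitaryGroup (Fin n) ℂ)
    (A : Matrix (Fin (n + 1)) (Fin (n + 1)) ℂ) :
    schurCompl ((unitaryEmbed V).1 * A) = V.1 * schurCompl A := by
  ext i j
  simp only [schurCompl, Matrix.of_apply, Matrix.mul_apply (M := V.1),
    unitaryEmbed_mul_apply_zero, unitaryEmbed_mul_apply_succ, Finset.sum_mul, Finset.sum_div,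
    ← Finset.sum_add_distrib]
  exact Finset.sum_congr rfl fun k _ => by ring

theorem logDetOneSub_unitaryEmbed_mul (V : Matrix.unitaryGroup (Fin n) ℂ)
    (A : Matrix (Fin (n + 1)) (Fin (n + 1)) ℂ) :
    logDetOneSub ((unitaryEmbed V).1 * A) =
      Complex.log (1 - A 0 0) + logDetOneSub (V.1 * schurCompl A) := by
  rw [logDetOneSub, unitaryEmbed_mul_apply_zero, schurCompl_unitaryEmbed_mul]

end UnitaryGroup

/-! ### Exponential moments -/

section ExponentialMoment

open scoped Matrix Matrix.Norms.L2Operator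

theorem exp_mul_im_log_one_sub_le_of_norm_le_half {a : ℂ} (ha : ‖a‖ ≤ 1 / 2) {t : ℝ}
    (ht : |t| ≤ 1) :
    exp (t * (Complex.log (1 - a)).im) ≤ 1 - t * a.im + 4 * ‖a‖ ^ 2 := by
  set x := (Complex.log (1 - a)).im
  have abs_mul_le {y b : ℝ} (hy : |y| ≤ b) : |t * y| ≤ b := by
    rw [abs_mul]
    exact (mul_le_of_le_one_left (abs_nonneg y) ht).trans hy
  have first_order : |t * (x + a.im)| ≤ ‖a‖ ^ 2 := by
    have h := Complex.norm_log_one_add_sub_self_le (z := -a) (by rw [norm_neg]; linarith)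
    rw [norm_neg, ← sub_eq_add_neg, sub_neg_eq_add] at h
    have hinv : (1 - ‖a‖)⁻¹ ≤ 2 := by
      rw [inv_le_comm₀ (by linarith) two_pos]
      linarith
    refine abs_mul_le (((Complex.abs_im_le_norm (Complex.log (1 - a) + a)).trans h).trans ?_)
    linarith [mul_le_mul_of_nonneg_left hinv (sq_nonneg ‖a‖)]
  have zeroth_order : |t * x| ≤ 3 / 2 * ‖a‖ := by
    have h := Complex.norm_log_one_add_half_le_self (z := -a) (by rwa [norm_neg])
    rw [norm_neg, ← sub_eq_add_neg] at h
    exact abs_mul_le ((Complex.abs_im_le_norm _).trans h)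
  have hexp := (abs_le.1 (abs_exp_sub_one_sub_id_le (x := t * x) (by linarith))).2
  have hsq : (t * x) ^ 2 ≤ (3 / 2 * ‖a‖) ^ 2 := sq_le_sq.2 (zeroth_order.trans (le_abs_self _))
  linarith [(abs_le.1 first_order).2, mul_add t x a.im, sq_nonneg ‖a‖, mul_pow (3 / 2) ‖a‖ 2]

theorem exp_mul_im_log_one_sub_le {a : ℂ} (ha : ‖a‖ < 1) {t : ℝ} (ht : |t| ≤ 1) :
    exp (t * (Complex.log (1 - a)).im) ≤ 1 - t * a.im + 32 * ‖a‖ ^ 2 := by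
  rcases le_or_gt ‖a‖ (1 / 2) with h | h
  · linarith [exp_mul_im_log_one_sub_le_of_norm_le_half h ht, sq_nonneg ‖a‖]
  have harg : |(Complex.log (1 - a)).im| ≤ π / 2 := by
    rw [Complex.log_im, Complex.abs_arg_le_pi_div_two_iff, Complex.sub_re, Complex.one_re]
    linarith [Complex.re_le_norm a]
  have hprod : t * (Complex.log (1 - a)).im ≤ 2 := by
    refine (le_abs_self _).trans ?_
    rw [abs_mul]
    linarith [mul_le_of_le_one_left (abs_nonneg (Complex.log (1 - a)).im) ht, pi_le_four]
  have hexp : exp (t * (Complex.log (1 - a)).im) ≤ 8 :=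
    calc exp (t * (Complex.log (1 - a)).im) ≤ exp 1 ^ 2 := by
          rw [← exp_nat_mul]
          exact exp_le_exp.2 (by simpa using hprod)
      _ ≤ 2.8 ^ 2 := by
          gcongr
          linarith [exp_one_lt_d9]
      _ ≤ 8 := by norm_num
  have him : t * a.im ≤ ‖a‖ := by
    refine (le_abs_self _).trans ?_
    rw [abs_mul]
    exact (mul_le_of_le_one_left (abs_nonneg _) ht).trans (Complex.abs_im_le_norm a)
  nlinarith

variable {n : ℕ}

theorem norm_unitaryGroup_mul_lt_one {m 𝕜 : Type*} [Fintype m] [DecidableEq m] [RCLike 𝕜]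
    {W : Matrix m m 𝕜} (hW : ‖W‖ < 1) (U : Matrix.unitaryGroup m 𝕜) : ‖U.1 * W‖ < 1 :=
  (CStarRing.norm_coe_unitary_mul U W).trans_lt hW

theorem continuous_logDetOneSub_unitaryGroup_mul {W : Matrix (Fin n) (Fin n) ℂ} (hW : ‖W‖ < 1) :
    Continuous fun U : Matrix.unitaryGroup (Fin n) ℂ => logDetOneSub (U.1 * W) :=
  continuousOn_logDetOneSub.comp_continuous (by fun_prop) fun U =>
    mem_ball_zero_iff.2 (norm_unitaryGroup_mul_lt_one hW U)

theorem integral_one_sub_mul_im_entry_add_le (P : Measure (Matrix.unitaryGroup (Fin (n + 1)) ℂ))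
    [IsProbabilityMeasure P] [P.IsMulLeftInvariant]
    {W : Matrix (Fin (n + 1)) (Fin (n + 1)) ℂ} (hW : ‖W‖ < 1) (t : ℝ) :
    ∫ U : Matrix.unitaryGroup (Fin (n + 1)) ℂ,
      (1 - t * ((U.1 * W) 0 0).im + 32 * ‖(U.1 * W) 0 0‖ ^ 2) ∂P ≤ 1 + 32 / (n + 1 : ℝ) := by
  let w : Fin (n + 1) → ℂ := fun k => W k 0
  have hw : ∑ k, ‖w k‖ ^ 2 ≤ 1 :=
    (sum_norm_sq_col_le W 0).trans (pow_le_one₀ (norm_nonneg W) hW.le)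
  have him : ∫ U : Matrix.unitaryGroup (Fin (n + 1)) ℂ, ((U.1 *ᵥ w) 0).im ∂P = 0 := by
    have h := integral_im (𝕜 := ℂ) (integrable_of_continuous_of_compactSpace (μ := P)
      (f := fun U : Matrix.unitaryGroup (Fin (n + 1)) ℂ => (U.1 *ᵥ w) 0) (by fun_prop))
    simpa [integral_unitaryGroup_mulVec] using h
  calc ∫ U : Matrix.unitaryGroup (Fin (n + 1)) ℂ,
        (1 - t * ((U.1 *ᵥ w) 0).im + 32 * ‖(U.1 *ᵥ w) 0‖ ^ 2) ∂P
      = 1 - t * 0 + 32 * ((∑ k, ‖w k‖ ^ 2) / (n + 1 : ℕ)) := by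
        rw [integral_add, integral_sub (integrable_const 1), integral_const_mul,
          integral_const_mul, him, integral_norm_sq_unitaryGroup_mulVec]
        · simp
        all_goals exact integrable_of_continuous_of_compactSpace (by fun_prop)
    _ = 1 + 32 * (∑ k, ‖w k‖ ^ 2) / (n + 1 : ℝ) := by
        push_cast
        ring
    _ ≤ 1 + 32 / (n + 1 : ℝ) := by
        gcongr
        linarith

/- Conditionally on its first row, `U` may be replaced by `(1 ⊕ V) U` with an independent `V`, and
this splits off one factor of the exponential. -/
theorem integral_exp_mul_im_logDetOneSub_le (P : Measure (Matrix.unitaryGroup (Fin n) ℂ))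
    [IsProbabilityMeasure P] [P.IsMulLeftInvariant] {W : Matrix (Fin n) (Fin n) ℂ} (hW : ‖W‖ < 1)
    {t : ℝ} (ht : |t| ≤ 1) :
    ∫ U : Matrix.unitaryGroup (Fin n) ℂ, exp (t * (logDetOneSub (U.1 * W)).im) ∂P ≤
      ∏ k ∈ Finset.range n, (1 + 32 / (k + 1 : ℝ)) := by
  induction n with
  | zero => simp [logDetOneSub]
  | succ n ih =>
    obtain ⟨Q, hQ, hQ'⟩ :=
      exists_isProbabilityMeasure_isMulLeftInvariant (Matrix.unitaryGroup (Fin n) ℂ)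
    let C := ∏ k ∈ Finset.range n, (1 + 32 / (k + 1 : ℝ))
    let a : Matrix.unitaryGroup (Fin (n + 1)) ℂ → ℂ := fun U => (U.1 * W) 0 0
    have conditional_bound (U : Matrix.unitaryGroup (Fin (n + 1)) ℂ) :
        ∫ V, exp (t * (logDetOneSub ((unitaryEmbed V * U).1 * W)).im) ∂Q ≤
          (1 - t * (a U).im + 32 * ‖a U‖ ^ 2) * C := by
      have hUW := norm_unitaryGroup_mul_lt_one hW U
      simp only [Submonoid.coe_mul, Matrix.mul_assoc, logDetOneSub_unitaryEmbed_mul,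
        Complex.add_im, mul_add, exp_add, integral_const_mul]
      have hexp := exp_mul_im_log_one_sub_le ((norm_apply_le_l2_opNorm _ 0 0).trans_lt hUW) ht
      exact mul_le_mul hexp (ih Q (norm_schurCompl_lt_one hUW))
        (integral_nonneg fun V => (exp_pos _).le) ((exp_pos _).le.trans hexp)
    have hcont : Continuous fun U : Matrix.unitaryGroup (Fin (n + 1)) ℂ =>
        exp (t * (logDetOneSub (U.1 * W)).im) :=
      ((Complex.continuous_im.comp (continuous_logDetOneSub_unitaryGroup_mul hW)).const_mul t).rexp
    calc ∫ U : Matrix.unitaryGroup (Fin (n + 1)) ℂ,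
          exp (t * (logDetOneSub (U.1 * W)).im) ∂P
        = ∫ U, ∫ V, exp (t * (logDetOneSub ((unitaryEmbed V * U).1 * W)).im) ∂Q ∂P :=
          integral_eq_integral_integral_mul_left P Q continuous_unitaryEmbed hcont
      _ ≤ ∫ U, (1 - t * (a U).im + 32 * ‖a U‖ ^ 2) * C ∂P :=
          integral_mono_of_nonneg
            (.of_forall fun U => integral_nonneg fun V => (exp_pos _).le)
            (integrable_of_continuous_of_compactSpace (by fun_prop))
            (.of_forall conditional_bound)
      _ ≤ (1 + 32 / (n + 1 : ℝ)) * C := by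
          rw [integral_mul_const]
          exact mul_le_mul_of_nonneg_right (integral_one_sub_mul_im_entry_add_le P hW t)
            (Finset.prod_nonneg fun k _ => by positivity)
      _ = ∏ k ∈ Finset.range (n + 1), (1 + 32 / (k + 1 : ℝ)) := by
          rw [Finset.prod_range_succ, mul_comm]

theorem prod_one_add_div_succ_le_exp {c : ℝ} (hc : 0 ≤ c) (n : ℕ) :
    ∏ k ∈ Finset.range n, (1 + c / (k + 1 : ℝ)) ≤ exp (c * (1 + log n)) := by
  refine (prod_one_add_le_exp_sum _ fun k => by positivity).trans (exp_le_exp.2 ?_)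
  have h : ∑ k ∈ Finset.range n, c / (k + 1 : ℝ) = c * (harmonic n : ℝ) := by
    simp [harmonic, Finset.mul_sum, div_eq_mul_inv]
  rw [h]
  exact mul_le_mul_of_nonneg_left (harmonic_le_one_add_log n) hc

end ExponentialMoment

/-! ### Boundary values on the unit circle -/

section BoundaryValues

open scoped Topology Matrix.Norms.L2Operator

variable {n : ℕ}

theorem im_eigenLogSum {m : Type*} [Fintype m] [DecidableEq m] (A : Matrix m m ℂ) (c : ℂ) :
    (eigenLogSum A c).im = (A.charpoly.roots.map fun z => (1 - c * z).arg).sum := by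
  simpa [eigenLogSum, Multiset.map_map, ← Complex.log_im] using
    map_multiset_sum Complex.imAddGroupHom (A.charpoly.roots.map fun z => Complex.log (1 - c * z))

theorem abs_im_eigenLogSum_le (A : Matrix (Fin n) (Fin n) ℂ) (c : ℂ) :
    |(eigenLogSum A c).im| ≤ n * π := by
  have h := Multiset.sum_le_card_nsmul (A.charpoly.roots.map fun z => |(1 - c * z).arg|) π
    (Multiset.forall_mem_map_iff.2 fun z _ => Complex.abs_arg_le_pi _)
  rw [Multiset.card_map, card_roots_charpoly, Fintype.card_fin, nsmul_eq_mul] at h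
  rw [im_eigenLogSum]
  refine Multiset.abs_sum_le_sum_abs.trans ?_
  rwa [Multiset.map_map]

/- At `w = 1` the limit exists because the approach is radial, and it is `0 = arg 0`. -/
theorem tendsto_arg_one_sub_ofReal_mul {w : ℂ} (hw : ‖w‖ ≤ 1) :
    Tendsto (fun r : ℝ => (1 - r * w).arg) (𝓝[<] 1) (𝓝 (1 - w).arg) := by
  rcases eq_or_ne w 1 with rfl | hw1
  · refine tendsto_const_nhds.congr' (eventually_nhdsWithin_of_forall fun r (hr : r < 1) => ?_)
    have h : (1 - r * 1 : ℂ) = (1 - r : ℝ) := by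
      push_cast
      ring
    simp only [h, Complex.arg_ofReal_of_nonneg (sub_pos.2 hr).le, sub_self, Complex.arg_zero]
  · have h : ContinuousAt (fun r : ℝ => (1 - r * w).arg) 1 :=
      ContinuousAt.comp (f := fun r : ℝ => 1 - r * w)
        (Complex.continuousAt_arg
          (by simpa using one_sub_mem_slitPlane_of_norm_le_one hw hw1)) (by fun_prop)
    simpa [ContinuousAt] using h.tendsto.mono_left nhdsWithin_le_nhds

theorem norm_ofReal_smul_lt_one {E : Type*} [NormedAddCommGroup E] [NormedSpace ℂ E] {r : ℝ}
    (hr : r ∈ Set.Ioo 0 1) {x : E} (hx : ‖x‖ ≤ 1) : ‖(r : ℂ) • x‖ < 1 := by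
  rw [norm_smul, Complex.norm_real, Real.norm_of_nonneg hr.1.le]
  exact (mul_le_of_le_one_right hr.1.le hx).trans_lt hr.2

theorem tendsto_im_logDetOneSub {A : Matrix (Fin n) (Fin n) ℂ} {c : ℂ} (hc : ‖c • A‖ ≤ 1) :
    Tendsto (fun r : ℝ => (logDetOneSub ((r * c) • A)).im) (𝓝[<] 1)
      (𝓝 (eigenLogSum A c).im) := by
  have h : Tendsto (fun r : ℝ => (eigenLogSum A (r * c)).im) (𝓝[<] 1)
      (𝓝 (eigenLogSum A c).im) := by
    simp only [im_eigenLogSum, mul_assoc]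
    exact tendsto_multiset_sum _ fun z hz => tendsto_arg_one_sub_ofReal_mul
      ((norm_mul_le_l2_opNorm_smul_of_mem_roots_charpoly c hz).trans hc)
  refine h.congr' ?_
  filter_upwards [Ioo_mem_nhdsLT zero_lt_one] with r hr
  have hrc : ‖((r : ℂ) * c) • A‖ < 1 := mul_smul (r : ℂ) c A ▸ norm_ofReal_smul_lt_one hr hc
  rw [logDetOneSub_smul hrc]

theorem norm_unitaryGroup_le_one {m 𝕜 : Type*} [Fintype m] [DecidableEq m] [RCLike 𝕜]
    (U : Matrix.unitaryGroup m 𝕜) : ‖U.1‖ ≤ 1 :=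
  l2_opNorm_le_of_sum_norm_sq_mulVec_le zero_le_one fun w => by
    rw [sum_norm_sq_unitaryGroup_mulVec, one_pow, one_mul]

theorem norm_smul_unitaryGroup_le {m 𝕜 : Type*} [Fintype m] [DecidableEq m] [RCLike 𝕜] (c : 𝕜)
    (U : Matrix.unitaryGroup m 𝕜) : ‖c • U.1‖ ≤ ‖c‖ := by
  rw [norm_smul]
  exact mul_le_of_le_one_right (norm_nonneg c) (norm_unitaryGroup_le_one U)

theorem continuous_logDetOneSub_smul_unitaryGroup {c : ℂ} (hc : ‖c‖ < 1) :
    Continuous fun U : Matrix.unitaryGroup (Fin n) ℂ => logDetOneSub (c • U.1) :=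
  continuousOn_logDetOneSub.comp_continuous (by fun_prop) fun U =>
    mem_ball_zero_iff.2 ((norm_smul_unitaryGroup_le c U).trans_lt hc)

theorem integral_exp_mul_im_logDetOneSub_smul_le (P : Measure (Matrix.unitaryGroup (Fin n) ℂ))
    [IsProbabilityMeasure P] [P.IsMulLeftInvariant] {c : ℂ} (hc : ‖c‖ < 1) {t : ℝ}
    (ht : |t| ≤ 1) :
    ∫ U : Matrix.unitaryGroup (Fin n) ℂ, exp (t * (logDetOneSub (c • U.1)).im) ∂P ≤
      exp (32 * (1 + log n)) := by
  have hc' : ‖c • (1 : Matrix (Fin n) (Fin n) ℂ)‖ < 1 :=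
    (norm_smul_unitaryGroup_le c 1).trans_lt hc
  have h := integral_exp_mul_im_logDetOneSub_le P hc' ht
  simp only [Matrix.mul_smul, Matrix.mul_one] at h
  exact h.trans (prod_one_add_div_succ_le_exp (by norm_num) n)

theorem measurable_im_eigenLogSum {c : ℂ} (hc : ‖c‖ ≤ 1) :
    Measurable fun U : Matrix.unitaryGroup (Fin n) ℂ => (eigenLogSum U.1 c).im := by
  obtain ⟨r, -, hr, hlim⟩ := exists_seq_strictMono_tendsto' (zero_lt_one (α := ℝ))
  have hlim' : Tendsto r atTop (𝓝[<] 1) :=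
    tendsto_nhdsWithin_iff.2 ⟨hlim, .of_forall fun k => (hr k).2⟩
  refine measurable_of_tendsto_metrizable
    (f := fun k (U : Matrix.unitaryGroup (Fin n) ℂ) => (logDetOneSub ((r k * c) • U.1)).im)
    (fun k => ?_) (tendsto_pi_nhds.2 fun U => ?_)
  · exact (Complex.continuous_im.comp
      (continuous_logDetOneSub_smul_unitaryGroup (norm_ofReal_smul_lt_one (hr k) hc))).measurable
  · exact (tendsto_im_logDetOneSub ((norm_smul_unitaryGroup_le c U).trans hc)).comp hlim'

theorem integral_exp_mul_im_eigenLogSum_le (P : Measure (Matrix.unitaryGroup (Fin n) ℂ))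
    [IsProbabilityMeasure P] [P.IsMulLeftInvariant] {c : ℂ} (hc : ‖c‖ ≤ 1) {t : ℝ}
    (ht : |t| ≤ 1) :
    ∫ U : Matrix.unitaryGroup (Fin n) ℂ, exp (t * (eigenLogSum U.1 c).im) ∂P ≤
      exp (32 * (1 + log n)) := by
  have eventually_Ioo : ∀ᶠ r : ℝ in 𝓝[<] 1, r ∈ Set.Ioo (0 : ℝ) 1 := Ioo_mem_nhdsLT zero_lt_one
  have hlim := tendsto_integral_filter_of_dominated_convergence (μ := P) (l := 𝓝[<] (1 : ℝ))
    (F := fun r U => exp (t * (logDetOneSub ((r * c : ℂ) • U.1)).im))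
    (f := fun U => exp (t * (eigenLogSum U.1 c).im)) (fun _ => exp (n * π))
    ?meas ?bound (integrable_const _) ?lim
  case meas =>
    filter_upwards [eventually_Ioo] with r hr
    exact ((Complex.continuous_im.comp (continuous_logDetOneSub_smul_unitaryGroup
      (norm_ofReal_smul_lt_one hr hc))).const_mul t).rexp.aestronglyMeasurable
  case bound =>
    refine .of_forall fun r => .of_forall fun U => ?_
    rw [Real.norm_of_nonneg (exp_pos _).le]
    refine exp_le_exp.2 ((le_abs_self _).trans ?_)
    rw [abs_mul]
    exact (mul_le_of_le_one_left (abs_nonneg _) ht).trans (abs_im_logDetOneSub_le _)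
  case lim =>
    exact .of_forall fun U => ((tendsto_im_logDetOneSub
      ((norm_smul_unitaryGroup_le c U).trans hc)).const_mul t).rexp
  refine le_of_tendsto hlim ?_
  filter_upwards [eventually_Ioo] with r hr
  exact integral_exp_mul_im_logDetOneSub_smul_le P (norm_ofReal_smul_lt_one hr hc) ht

end BoundaryValues

/-! ### Counting eigenvalues by their phases -/

section PeriodCount

/-- The signed number of multiples of `2π` between `0` and `x`, each endpoint that is itself such
a multiple having weight one half. It records the jumps of `x ↦ arg (1 - exp (i x))`. -/
def periodCount (x : ℝ) : ℝ :=
  (⌊x / (2 * π)⌋ + ⌈x / (2 * π)⌉) / 2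

theorem monotone_periodCount : Monotone periodCount := fun x y hxy => by
  have h : x / (2 * π) ≤ y / (2 * π) := by gcongr
  unfold periodCount
  gcongr

theorem half_le_periodCount {x : ℝ} (hx : 0 < x) : 1 / 2 ≤ periodCount x := by
  have hx' : 0 < x / (2 * π) := by positivity
  have hfloor : (0 : ℝ) ≤ ⌊x / (2 * π)⌋ := mod_cast Int.floor_nonneg.2 hx'.le
  have hceil : (1 : ℝ) ≤ ⌈x / (2 * π)⌉ := mod_cast Int.one_le_ceil_iff.2 hx'
  unfold periodCount
  linarith

theorem periodCount_neg (x : ℝ) : periodCount (-x) = -periodCount x := by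
  simp only [periodCount, neg_div, Int.floor_neg, Int.ceil_neg]
  push_cast
  ring

theorem periodCount_add_int_mul_two_pi (x : ℝ) (k : ℤ) :
    periodCount (x + k * (2 * π)) = periodCount x + k := by
  have h : (x + k * (2 * π)) / (2 * π) = x / (2 * π) + k := by
    rw [add_div, mul_div_cancel_right₀ _ two_pi_pos.ne']
  simp only [periodCount, h, Int.floor_add_intCast, Int.ceil_add_intCast]
  push_cast
  ring

theorem periodCount_sub_two_pi (x : ℝ) : periodCount (x - 2 * π) = periodCount x - 1 := by
  simpa [sub_eq_add_neg] using periodCount_add_int_mul_two_pi x (-1)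

theorem periodCount_le_half {x : ℝ} (hx : x < 2 * π) : periodCount x ≤ 1 / 2 := by
  have h := half_le_periodCount (x := 2 * π - x) (by linarith)
  rw [← neg_sub, periodCount_neg, periodCount_sub_two_pi] at h
  linarith

theorem periodCount_of_mem_Ioo {x : ℝ} (hx : x ∈ Set.Ioo 0 (2 * π)) : periodCount x = 1 / 2 :=
  (periodCount_le_half hx.2).antisymm (half_le_periodCount hx.1)

theorem one_sub_exp_mul_I (x : ℝ) :
    1 - Complex.exp (x * Complex.I) = (2 * sin (x / 2) : ℝ) *
      (Complex.cos (x / 2 - π / 2 : ℝ) + Complex.sin (x / 2 - π / 2 : ℝ) * Complex.I) := by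
  have hx : (x : ℂ) = 2 * (x / 2 : ℝ) := by
    push_cast
    ring
  rw [← Complex.ofReal_cos, ← Complex.ofReal_sin, cos_sub_pi_div_two, sin_sub_pi_div_two,
    hx, Complex.exp_mul_I, Complex.cos_two_mul, Complex.sin_two_mul]
  push_cast
  linear_combination (-2 : ℂ) * Complex.sin_sq_add_cos_sq (x / 2 : ℂ)

theorem arg_one_sub_exp_mul_I_of_mem_Ioo {x : ℝ} (hx : x ∈ Set.Ioo 0 (2 * π)) :
    (1 - Complex.exp (x * Complex.I)).arg = x / 2 - π / 2 := by
  have hsin : 0 < sin (x / 2) :=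
    sin_pos_of_pos_of_lt_pi (by linarith [hx.1]) (by linarith [hx.2])
  rw [one_sub_exp_mul_I]
  exact Complex.arg_mul_cos_add_sin_mul_I (by positivity)
    ⟨by linarith [hx.1, pi_pos], by linarith [hx.2, pi_pos]⟩

theorem arg_one_sub_exp_mul_I (x : ℝ) :
    (1 - Complex.exp (x * Complex.I)).arg = x / 2 - π * periodCount x := by
  obtain ⟨k, ⟨hk0, hk1⟩, -⟩ := existsUnique_add_zsmul_mem_Ico two_pi_pos x 0
  rw [zsmul_eq_mul] at hk0 hk1
  have hexp : Complex.exp (x * Complex.I) =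
      Complex.exp ((x + k * (2 * π) : ℝ) * Complex.I) := by
    rw [← Complex.exp_periodic.int_mul k]
    push_cast
    ring_nf
  suffices (1 - Complex.exp ((x + k * (2 * π) : ℝ) * Complex.I)).arg =
      (x + k * (2 * π)) / 2 - π * periodCount (x + k * (2 * π)) by
    rw [hexp, this, periodCount_add_int_mul_two_pi]
    ring
  rcases hk0.eq_or_lt with h0 | h0
  · simp [← h0, periodCount]
  · have hmem : x + k * (2 * π) ∈ Set.Ioo 0 (2 * π) := ⟨h0, by linarith⟩
    rw [arg_one_sub_exp_mul_I_of_mem_Ioo hmem, periodCount_of_mem_Ioo hmem]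
    ring

end PeriodCount

section EigenAngles

theorem natCast_card_filter_mem {ι R : Type*} [AddCommMonoidWithOne R] (s : Multiset ι)
    (t : Set ι) [DecidablePred (· ∈ t)] :
    ((s.filter (· ∈ t)).card : R) = (s.map (t.indicator 1)).sum := by
  induction s using Multiset.induction with
  | empty => simp
  | cons a s ih =>
    by_cases h : a ∈ t
    · simp [h, ih, add_comm]
    · simp [h, ih]

variable {n : ℕ} (U : Matrix.unitaryGroup (Fin n) ℂ)

theorem mem_Ico_of_mem_eigenAngles {φ : ℝ} (hφ : φ ∈ eigenAngles n U) :
    φ ∈ Set.Ico 0 (2 * π) := by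
  obtain ⟨z, -, rfl⟩ := Multiset.mem_map.1 hφ
  have h₁ := Complex.neg_pi_lt_arg z
  have h₂ := Complex.arg_le_pi z
  split_ifs with h
  · exact ⟨h, by linarith⟩
  · exact ⟨by linarith, by linarith⟩

theorem card_eigenAngles : (eigenAngles n U).card = n := by
  rw [eigenAngles, Multiset.card_map, card_roots_charpoly, Fintype.card_fin]

theorem norm_eq_one_of_mem_roots_charpoly {z : ℂ} (hz : z ∈ U.1.charpoly.roots) : ‖z‖ = 1 := by
  open scoped Matrix.Norms.L2Operator in
  exact spectrum.norm_eq_one_of_unitary U.2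
    (Matrix.mem_spectrum_of_isRoot_charpoly (Polynomial.isRoot_of_mem_roots hz))

theorem map_exp_eigenAngles :
    (eigenAngles n U).map (fun φ : ℝ => Complex.exp (φ * Complex.I)) = U.1.charpoly.roots := by
  rw [eigenAngles, Multiset.map_map]
  refine (Multiset.map_congr rfl fun z hz => ?_).trans (Multiset.map_id _)
  have hz' : Complex.exp (z.arg * Complex.I) = z := by
    simpa [norm_eq_one_of_mem_roots_charpoly U hz] using Complex.norm_mul_exp_arg_mul_I z
  simp only [Function.comp_apply]
  split_ifs
  · exact hz'
  · rw [Complex.ofReal_add, add_mul, Complex.exp_add, hz']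
    simp

theorem countFun_eq_sum (θ : ℝ) :
    (countFun n U θ : ℝ) = ((eigenAngles n U).map ((Set.Icc 0 θ).indicator 1)).sum := by
  rw [countFun, countAngles, natCast_card_filter_mem]

/-- The phase of the characteristic polynomial of `U` at the point `exp (iα)` of the unit circle,
each linear factor contributing its principal argument. -/
def eigenPhase (α : ℝ) : ℝ :=
  (eigenLogSum U.1 (Complex.exp (-α * Complex.I))).im

theorem eigenPhase_eq_sum (α : ℝ) :
    eigenPhase U α =
      ((eigenAngles n U).map fun φ => (φ - α) / 2 - π * periodCount (φ - α)).sum := by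
  rw [eigenPhase, im_eigenLogSum, ← map_exp_eigenAngles, Multiset.map_map]
  refine congrArg Multiset.sum (Multiset.map_congr rfl fun φ _ => ?_)
  rw [Function.comp_apply, ← Complex.exp_add, ← arg_one_sub_exp_mul_I]
  push_cast
  ring_nf

/-- The number of eigenvalues of `U` on the arc run through from `exp (iα)` to `exp (iβ)`, those at
the two ends having weight one half; running backwards, for `β < α`, reverses the sign. -/
def arcCount (α β : ℝ) : ℝ :=
  ((eigenAngles n U).map fun φ => periodCount (φ - α) - periodCount (φ - β)).sum

theorem pi_mul_arcCount (α β : ℝ) :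
    π * arcCount U α β = eigenPhase U β - eigenPhase U α + n * ((β - α) / 2) := by
  have hconst : (n : ℝ) * ((β - α) / 2) = ((eigenAngles n U).map fun _ => (β - α) / 2).sum := by
    rw [Multiset.map_const', Multiset.sum_replicate, card_eigenAngles, nsmul_eq_mul]
  rw [arcCount, eigenPhase_eq_sum, eigenPhase_eq_sum, hconst, ← Multiset.sum_map_mul_left,
    ← Multiset.sum_map_sub, ← Multiset.sum_map_add]
  refine congrArg Multiset.sum (Multiset.map_congr rfl fun φ _ => ?_)
  ring

theorem countFun_le_arcCount {α β θ : ℝ} (hα : α < 0) (hαβ : α ≤ β) (hθ : θ < β) :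
    countFun n U θ ≤ arcCount U α β := by
  rw [countFun_eq_sum, arcCount]
  refine Multiset.sum_map_le_sum_map _ _ fun φ _ => ?_
  by_cases h : φ ∈ Set.Icc 0 θ
  · have hφα := half_le_periodCount (x := φ - α) (by linarith [h.1])
    have hφβ := half_le_periodCount (x := β - φ) (by linarith [h.2])
    rw [← neg_sub, periodCount_neg] at hφβ
    rw [Set.indicator_of_mem h, Pi.one_apply]
    linarith
  · rw [Set.indicator_of_notMem h, sub_nonneg]
    exact monotone_periodCount (by linarith)

theorem arcCount_le_countFun {β θ : ℝ} (hβ : β ≤ 2 * π) (hβθ : β ≤ θ) :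
    arcCount U 0 β ≤ countFun n U θ := by
  rw [countFun_eq_sum, arcCount]
  refine Multiset.sum_map_le_sum_map _ _ fun φ hφ => ?_
  obtain ⟨hφ0, hφ1⟩ := mem_Ico_of_mem_eigenAngles U hφ
  have hφ2 := periodCount_le_half hφ1
  rw [sub_zero]
  by_cases h : φ ≤ θ
  · have hφβ : periodCount (φ - 2 * π) ≤ periodCount (φ - β) := monotone_periodCount (by linarith)
    rw [periodCount_sub_two_pi] at hφβ
    rw [Set.indicator_of_mem (Set.mem_Icc.2 ⟨hφ0, h⟩), Pi.one_apply]
    linarith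
  · have hφβ := half_le_periodCount (x := φ - β) (by linarith)
    rw [Set.indicator_of_notMem fun hmem => h hmem.2]
    linarith

end EigenAngles

/-! ### The Kolmogorov distance and the maximum of the phases over a grid -/

section KolmogorovDistance

variable {n : ℕ} {U : Matrix.unitaryGroup (Fin n) ℂ} {M : ℝ}

theorem abs_arcCount_sub_le {α β : ℝ} (hα : |eigenPhase U α| ≤ M) (hβ : |eigenPhase U β| ≤ M) :
    |arcCount U α β - n * ((β - α) / (2 * π))| ≤ M := by
  have h : arcCount U α β - n * ((β - α) / (2 * π)) =
      (eigenPhase U β - eigenPhase U α) / π := by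
    rw [eq_div_iff pi_pos.ne', sub_mul, mul_comm, pi_mul_arcCount]
    field_simp
    ring
  have hM : 0 ≤ M := (abs_nonneg _).trans hα
  rw [h, abs_div, abs_of_pos pi_pos, div_le_iff₀ pi_pos]
  calc |eigenPhase U β - eigenPhase U α| ≤ M + M := (abs_sub _ _).trans (add_le_add hβ hα)
    _ ≤ M * π := by nlinarith [pi_gt_three]

theorem dK_nonneg : 0 ≤ dK n U :=
  Real.iSup_nonneg fun _ => abs_nonneg _

theorem abs_countFun_sub_le (hn : n ≠ 0)
    (hM : ∀ k ∈ Finset.Icc (-1 : ℤ) n, |eigenPhase U (2 * π * k / n)| ≤ M) {s : ℝ}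
    (hs : s ∈ Set.Ico 0 (n : ℝ)) :
    |countFun n U (2 * π * s / n) - s| ≤ M + 2 := by
  have hn' : (0 : ℝ) < n := by positivity
  have hk0 : 0 ≤ ⌊s⌋ := Int.floor_nonneg.2 hs.1
  have hkn : ⌊s⌋ < n := Int.floor_lt.2 (mod_cast hs.2)
  have hks := Int.floor_le s
  have hsk := Int.lt_floor_add_one s
  generalize ⌊s⌋ = k at hk0 hkn hks hsk
  have arc_bound : ∀ i ∈ Finset.Icc (-1 : ℤ) n, ∀ j ∈ Finset.Icc (-1 : ℤ) n,
      |arcCount U (2 * π * i / n) (2 * π * j / n) - (j - i)| ≤ M := fun i hi j hj => by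
    convert abs_arcCount_sub_le (hM i hi) (hM j hj) using 3
    field_simp
  have lower := arc_bound 0 (Finset.mem_Icc.2 ⟨by omega, by omega⟩)
    k (Finset.mem_Icc.2 ⟨by omega, by omega⟩)
  have upper := arc_bound (-1) (Finset.mem_Icc.2 ⟨by omega, by omega⟩)
    (k + 1) (Finset.mem_Icc.2 ⟨by omega, by omega⟩)
  push_cast at lower upper
  rw [mul_zero, zero_div] at lower
  have arc_le_count : arcCount U 0 (2 * π * k / n) ≤ countFun n U (2 * π * s / n) :=
    arcCount_le_countFun U
      ((div_le_iff₀ hn').2 (by gcongr; exact_mod_cast hkn.le)) (by gcongr)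
  have count_le_arc : countFun n U (2 * π * s / n) ≤
      arcCount U (2 * π * -1 / n) (2 * π * (k + 1) / n) :=
    countFun_le_arcCount U (div_neg_of_neg_of_pos (by linarith [pi_pos]) hn')
      (by gcongr; linarith [hs.1]) (by gcongr)
  rw [abs_le] at lower upper ⊢
  constructor <;> linarith

theorem dK_le (hn : n ≠ 0)
    (hM : ∀ k ∈ Finset.Icc (-1 : ℤ) n, |eigenPhase U (2 * π * k / n)| ≤ M) :
    dK n U ≤ (M + 2) / n := by
  have hn' : (0 : ℝ) < n := by positivity
  have : Nonempty (Set.Ico (0 : ℝ) (2 * π)) := ⟨⟨0, le_rfl, two_pi_pos⟩⟩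
  refine ciSup_le fun ⟨θ, hθ0, hθ1⟩ => ?_
  obtain ⟨s, hs, rfl⟩ : ∃ s ∈ Set.Ico 0 (n : ℝ), θ = 2 * π * s / n :=
    ⟨n * (θ / (2 * π)),
      ⟨by positivity, mul_lt_of_lt_one_right hn' ((div_lt_one two_pi_pos).2 hθ1)⟩, by field_simp⟩
  calc |(countFun n U (2 * π * s / n) : ℝ) / n - 2 * π * s / n / (2 * π)|
      = |(countFun n U (2 * π * s / n) - s) / n| := by
        congr 1
        field_simp
    _ = |countFun n U (2 * π * s / n) - s| / n := by rw [abs_div, abs_of_pos hn']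
    _ ≤ (M + 2) / n := by
        gcongr
        exact abs_countFun_sub_le hn hM hs

end KolmogorovDistance

section MaximalInequality

theorem integrable_sup' {Ω ι : Type*} [MeasurableSpace Ω] {P : Measure Ω} {s : Finset ι}
    (hs : s.Nonempty) {X : ι → Ω → ℝ} (hX : ∀ i ∈ s, Integrable (X i) P) :
    Integrable (s.sup' hs X) P :=
  Finset.sup'_induction hs X (p := (Integrable · P)) (fun _ hf _ hg => hf.sup hg) hX

theorem integral_sup'_le_log {Ω ι : Type*} [MeasurableSpace Ω] {P : Measure Ω}
    [IsProbabilityMeasure P] {s : Finset ι} (hs : s.Nonempty) {X : ι → Ω → ℝ} {C : ℝ}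
    (hX : ∀ i ∈ s, Integrable (X i) P) (hexp : ∀ i ∈ s, Integrable (fun ω => exp (X i ω)) P)
    (hC : ∀ i ∈ s, ∫ ω, exp (X i ω) ∂P ≤ C) :
    ∫ ω, s.sup' hs X ω ∂P ≤ log (s.card * C) := by
  have hsum : Integrable (fun ω => ∑ i ∈ s, exp (X i ω)) P := integrable_finsetSum s hexp
  have hle : ∀ ω, exp (s.sup' hs X ω) ≤ ∑ i ∈ s, exp (X i ω) := fun ω => by
    obtain ⟨i, hi, h⟩ := s.exists_mem_eq_sup' hs fun i => X i ω
    rw [Finset.sup'_apply, h]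
    exact Finset.single_le_sum (f := fun i => exp (X i ω)) (fun j _ => (exp_pos _).le) hi
  have hsup := integrable_sup' hs hX
  have hexpsup : Integrable (fun ω => exp (s.sup' hs X ω)) P :=
    hsum.mono' hsup.aestronglyMeasurable.aemeasurable.exp.aestronglyMeasurable
      (.of_forall fun ω => by simpa using hle ω)
  have jensen : exp (∫ ω, s.sup' hs X ω ∂P) ≤ ∫ ω, exp (s.sup' hs X ω) ∂P :=
    convexOn_exp.map_integral_le continuousOn_exp isClosed_univ (by simp) hsup hexpsup
  rw [← log_exp (∫ ω, s.sup' hs X ω ∂P)]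
  refine log_le_log (exp_pos _) ?_
  calc exp (∫ ω, s.sup' hs X ω ∂P) ≤ ∫ ω, exp (s.sup' hs X ω) ∂P := jensen
    _ ≤ ∫ ω, ∑ i ∈ s, exp (X i ω) ∂P := integral_mono hexpsup hsum hle
    _ = ∑ i ∈ s, ∫ ω, exp (X i ω) ∂P := integral_finsetSum s hexp
    _ ≤ s.card * C := by simpa using Finset.sum_le_sum hC

end MaximalInequality

section Expectation

variable {n : ℕ} (P : Measure (Matrix.unitaryGroup (Fin n) ℂ)) (α : ℝ)

theorem measurable_eigenPhase :
    Measurable fun U : Matrix.unitaryGroup (Fin n) ℂ => eigenPhase U α :=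
  measurable_im_eigenLogSum (by rw [← Complex.ofReal_neg, Complex.norm_exp_ofReal_mul_I])

theorem integrable_eigenPhase [IsFiniteMeasure P] :
    Integrable (fun U : Matrix.unitaryGroup (Fin n) ℂ => eigenPhase U α) P :=
  .of_bound (measurable_eigenPhase α).aestronglyMeasurable (n * π)
    (.of_forall fun U => abs_im_eigenLogSum_le U.1 _)

theorem integrable_exp_mul_eigenPhase [IsFiniteMeasure P] (t : ℝ) :
    Integrable (fun U : Matrix.unitaryGroup (Fin n) ℂ => exp (t * eigenPhase U α)) P :=
  ProbabilityTheory.integrable_exp_mul_of_mem_Icc (measurable_eigenPhase α).aemeasurable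
    (.of_forall fun U => abs_le.1 (abs_im_eigenLogSum_le U.1 _))

theorem integrable_exp_abs_eigenPhase [IsFiniteMeasure P] :
    Integrable (fun U : Matrix.unitaryGroup (Fin n) ℂ => exp |eigenPhase U α|) P := by
  simpa using ProbabilityTheory.integrable_exp_mul_abs
    (integrable_exp_mul_eigenPhase P α 1) (integrable_exp_mul_eigenPhase P α (-1))

variable [IsProbabilityMeasure P] [P.IsMulLeftInvariant]

theorem integral_exp_mul_eigenPhase_le {t : ℝ} (ht : |t| ≤ 1) :
    ∫ U, exp (t * eigenPhase U α) ∂P ≤ exp (32 * (1 + log n)) :=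
  integral_exp_mul_im_eigenLogSum_le P
    (by rw [← Complex.ofReal_neg, Complex.norm_exp_ofReal_mul_I]) ht

theorem integral_exp_abs_eigenPhase_le :
    ∫ U, exp |eigenPhase U α| ∂P ≤ 2 * exp (32 * (1 + log n)) := by
  have hpos := integrable_exp_mul_eigenPhase P α 1
  have hneg := integrable_exp_mul_eigenPhase P α (-1)
  calc ∫ U, exp |eigenPhase U α| ∂P
      ≤ ∫ U, (exp (1 * eigenPhase U α) + exp (-1 * eigenPhase U α)) ∂P :=
        integral_mono (integrable_exp_abs_eigenPhase P α) (hpos.add hneg) fun U => by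
          simpa using exp_abs_le (eigenPhase U α)
    _ = ∫ U, exp (1 * eigenPhase U α) ∂P + ∫ U, exp (-1 * eigenPhase U α) ∂P :=
        integral_add hpos hneg
    _ ≤ 2 * exp (32 * (1 + log n)) := by
        rw [two_mul]
        exact add_le_add (integral_exp_mul_eigenPhase_le P α (by simp))
          (integral_exp_mul_eigenPhase_le P α (by simp))

theorem integral_dK_le (hn : n ≠ 0) :
    ∫ U, dK n U ∂P ≤ (log ((n + 2) * (2 * exp (32 * (1 + log n)))) + 2) / n := by
  let X : ℤ → Matrix.unitaryGroup (Fin n) ℂ → ℝ := fun k U => |eigenPhase U (2 * π * k / n)|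
  have hne : (Finset.Icc (-1 : ℤ) n).Nonempty := ⟨0, by simp⟩
  have hX : ∀ k ∈ Finset.Icc (-1 : ℤ) n, Integrable (X k) P := fun k _ =>
    (integrable_eigenPhase P _).abs
  have hsup := integrable_sup' hne hX
  have hdK : ∀ U, dK n U ≤ ((Finset.Icc (-1 : ℤ) n).sup' hne X U + 2) / n := fun U =>
    dK_le hn fun k hk => by
      rw [Finset.sup'_apply]
      exact Finset.le_sup' (f := fun k => X k U) hk
  have hmax := integral_sup'_le_log hne hX
    (fun k _ => integrable_exp_abs_eigenPhase P _) (fun k _ => integral_exp_abs_eigenPhase_le P _)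
  have hcard : ((Finset.Icc (-1 : ℤ) n).card : ℝ) = n + 2 := by
    rw [Int.card_Icc, sub_neg_eq_add, add_assoc, one_add_one_eq_two]
    norm_cast
  rw [hcard] at hmax
  calc ∫ U, dK n U ∂P ≤ ∫ U, ((Finset.Icc (-1 : ℤ) n).sup' hne X U + 2) / n ∂P :=
        integral_mono_of_nonneg (.of_forall fun U => dK_nonneg)
          ((hsup.add (integrable_const _)).div_const _) (.of_forall hdK)
    _ = (∫ U, (Finset.Icc (-1 : ℤ) n).sup' hne X U ∂P + 2) / n := by
        rw [integral_div, integral_add hsup (integrable_const _)]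
        simp
    _ ≤ (log ((n + 2) * (2 * exp (32 * (1 + log n)))) + 2) / n := by gcongr

theorem log_mul_two_mul_exp_add_two_le {x : ℝ} (hx : 2 ≤ x) :
    log ((x + 2) * (2 * exp (32 * (1 + log x)))) + 2 ≤ 103 * log x := by
  have hpoly : log ((x + 2) * 2) ≤ 3 * log x := by
    rw [← log_rpow (by linarith)]
    refine log_le_log (by positivity) ?_
    norm_cast
    nlinarith [mul_nonneg (sub_nonneg.2 hx) (sq_nonneg x)]
  have hlog : 1 / 2 ≤ log x := by
    linarith [log_two_gt_d9, log_le_log two_pos hx]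
  rw [← mul_assoc, log_mul (by positivity) (exp_pos _).ne', log_exp]
  linarith

end Expectation

end

/-- There is a universal constant `c₂ > 0` such that for every `N ≥ 2` and every Haar-distributed
random `N × N` unitary matrix, `𝔼 d_K(μ_N, ν) ≤ c₂ log N / N`. -/
theorem expected_kolmogorov_upper_bound :
    ∃ c₂ : ℝ, 0 < c₂ ∧ ∀ N : ℕ, 2 ≤ N →
      ∀ ℙ : Measure (Matrix.unitaryGroup (Fin N) ℂ),
        IsProbabilityMeasure ℙ → ℙ.IsHaarMeasure →
          ∫ U, dK N U ∂ℙ ≤ c₂ * Real.log N / N := by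
  refine ⟨103, by norm_num, fun N hN P _ _ => (integral_dK_le P (by omega)).trans ?_⟩
  gcongr
  exact log_mul_two_mul_exp_add_two_le (by exact_mod_cast hN)
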